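/- Let n ≥ 2 and let t : {1,…,2n} → {A,B} be a type assignment with t(2n−2)=B, t(2n−1)=B, t(2n)=A, and t(i)=B for some i < 2n−2. Then every stable matching of the instance contains the pair {2n−2,2n−1}, and the stable matchings of the instance are exactly the sets M' ∪ {{2n−2,2n−1}} where M' ranges over the stable matchings of the restricted 1-attribute instance on {1,…,2n−3} ∪ {2n}. -/

import Mathlib

/-!
Write `x = 2n-2`, `y = 2n-1` (both of type `B`) and `z = 2n` (of type `A`).

If `{x, y}` is not matched, it blocks unless one of `x`, `y` has the partner `z`, the only person
either of them could like better than the other. But then `z` has one of its two worst partners,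
and the type `B` person `i < x`, whose favourite is `z`, forms a blocking pair with `z`. So `{x, y}`
lies in every stable matching (`topPair_mem`).

Removing `{x, y}` keeps the partners of everybody else, so no blocking pair is created. Conversely,
adding `{x, y}` to a stable matching on the others could only create a blocking pair joining `x` or
`y` to `z`, since nobody else improves on the partner `x` or `y` has; but `z` already has a partner
below `x` and refuses.
-/

/-- The two preference types in the 1-attribute stable roommate model. -/
inductive AttrType : Type
  | A : AttrType
  | B : AttrType
  deriving DecidableEq

/-- In the 1-attribute instance with type assignment `t`, person `i`
prefers person `j` to person `k`: type `A` people prefer smaller indices,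
type `B` people prefer larger indices. -/
def Prefers (t : ℕ → AttrType) (i j k : ℕ) : Prop :=
  match t i with
  | AttrType.A => j < k
  | AttrType.B => k < j

/-- `M` is a matching of the people in `S`: a partition of `S` into
unordered pairs. -/
def IsMatching (S : Finset ℕ) (M : Finset (Finset ℕ)) : Prop :=
  (∀ p ∈ M, ∃ i j, i ≠ j ∧ i ∈ S ∧ j ∈ S ∧ p = {i, j}) ∧
  (∀ i ∈ S, ∃! p, p ∈ M ∧ i ∈ p)

/-- The pair `{i, j}` is a blocking pair for the matching `M`:
it is not in `M`, and each of `i`, `j` prefers the other to their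
partner in `M`. -/
def IsBlocking (t : ℕ → AttrType) (M : Finset (Finset ℕ)) (i j : ℕ) : Prop :=
  i ≠ j ∧ ({i, j} : Finset ℕ) ∉ M ∧
  (∀ k, ({i, k} : Finset ℕ) ∈ M → k ≠ i → Prefers t i j k) ∧
  (∀ k, ({j, k} : Finset ℕ) ∈ M → k ≠ j → Prefers t j i k)

/-- `M` is a stable matching of the 1-attribute instance on the set of
people `S` with type assignment `t`. -/
def IsStable (t : ℕ → AttrType) (S : Finset ℕ) (M : Finset (Finset ℕ)) : Prop :=
  IsMatching S M ∧ ∀ i ∈ S, ∀ j ∈ S, ¬ IsBlocking t M i j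

theorem prefers_A {t : ℕ → AttrType} {i j k : ℕ} (h : t i = AttrType.A) :
    Prefers t i j k ↔ j < k := by
  simp [Prefers, h]

theorem prefers_B {t : ℕ → AttrType} {i j k : ℕ} (h : t i = AttrType.B) :
    Prefers t i j k ↔ k < j := by
  simp [Prefers, h]

theorem IsBlocking.symm {t : ℕ → AttrType} {M : Finset (Finset ℕ)} {i j : ℕ}
    (h : IsBlocking t M i j) : IsBlocking t M j i :=
  ⟨h.1.symm, by rw [Finset.pair_comm]; exact h.2.1, h.2.2.2, h.2.2.1⟩

theorem IsMatching.subset {S p : Finset ℕ} {M : Finset (Finset ℕ)} (h : IsMatching S M)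
    (hp : p ∈ M) : p ⊆ S := by
  obtain ⟨i, j, -, hi, hj, rfl⟩ := h.1 p hp
  intro a ha
  simp only [Finset.mem_insert, Finset.mem_singleton] at ha
  rcases ha with rfl | rfl <;> assumption

theorem IsMatching.eq_of_mem {S p q : Finset ℕ} {M : Finset (Finset ℕ)} {i : ℕ}
    (h : IsMatching S M) (hp : p ∈ M) (hq : q ∈ M) (hip : i ∈ p) (hiq : i ∈ q) : p = q :=
  (h.2 i (h.subset hp hip)).unique ⟨hp, hip⟩ ⟨hq, hiq⟩

theorem IsMatching.exists_partner {S : Finset ℕ} {M : Finset (Finset ℕ)} {i : ℕ}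
    (h : IsMatching S M) (hi : i ∈ S) : ∃ k ∈ S, k ≠ i ∧ ({i, k} : Finset ℕ) ∈ M := by
  obtain ⟨p, ⟨hp, hip⟩, -⟩ := h.2 i hi
  obtain ⟨a, b, hab, ha, hb, rfl⟩ := h.1 p hp
  simp only [Finset.mem_insert, Finset.mem_singleton] at hip
  rcases hip with rfl | rfl
  · exact ⟨b, hb, hab.symm, hp⟩
  · exact ⟨a, ha, hab, by rwa [Finset.pair_comm]⟩

theorem IsMatching.partner_unique {S : Finset ℕ} {M : Finset (Finset ℕ)} {i k l : ℕ}
    (h : IsMatching S M) (hk : ({i, k} : Finset ℕ) ∈ M) (hl : ({i, l} : Finset ℕ) ∈ M) :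
    k = l := by
  have e : ({i, k} : Finset ℕ) = {i, l} := h.eq_of_mem (i := i) hk hl (by simp) (by simp)
  have h1 : k ∈ ({i, l} : Finset ℕ) := by rw [← e]; simp
  have h2 : l ∈ ({i, k} : Finset ℕ) := by rw [e]; simp
  simp only [Finset.mem_insert, Finset.mem_singleton] at h1 h2
  omega

theorem IsMatching.erase_pair {S S' : Finset ℕ} {M : Finset (Finset ℕ)} {x y : ℕ}
    (hS : ∀ a, a ∈ S' ↔ a ∈ S ∧ a ≠ x ∧ a ≠ y) (h : IsMatching S M)
    (hxy : ({x, y} : Finset ℕ) ∈ M) : IsMatching S' (M.erase {x, y}) := by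
  refine ⟨fun p hp => ?_, fun i hi => ?_⟩
  · obtain ⟨hne, hpM⟩ := Finset.mem_erase.1 hp
    have key : ∀ a ∈ p, a ∈ S' := by
      intro a ha
      refine (hS a).2 ⟨h.subset hpM ha, ?_, ?_⟩
      · rintro rfl
        exact hne (h.eq_of_mem hpM hxy ha (by simp))
      · rintro rfl
        exact hne (h.eq_of_mem hpM hxy ha (by simp))
    obtain ⟨i, j, hij, -, -, rfl⟩ := h.1 p hpM
    exact ⟨i, j, hij, key i (by simp), key j (by simp), rfl⟩
  · obtain ⟨hiS, hix, hiy⟩ := (hS i).1 hi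
    obtain ⟨p, ⟨hp, hip⟩, hu⟩ := h.2 i hiS
    refine ⟨p, ⟨Finset.mem_erase.2 ⟨?_, hp⟩, hip⟩,
      fun q hq => hu q ⟨Finset.mem_of_mem_erase hq.1, hq.2⟩⟩
    rintro rfl
    simp [hix, hiy] at hip

theorem IsMatching.union_pair {S S' : Finset ℕ} {M : Finset (Finset ℕ)} {x y : ℕ}
    (hS : ∀ a, a ∈ S' ↔ a ∈ S ∧ a ≠ x ∧ a ≠ y) (hne : x ≠ y) (hx : x ∈ S) (hy : y ∈ S)
    (h : IsMatching S' M) : IsMatching S (M ∪ {({x, y} : Finset ℕ)}) := by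
  refine ⟨fun p hp => ?_, fun i hi => ?_⟩
  · rcases Finset.mem_union.1 hp with hp | hp
    · obtain ⟨i, j, hij, hi, hj, rfl⟩ := h.1 p hp
      exact ⟨i, j, hij, ((hS i).1 hi).1, ((hS j).1 hj).1, rfl⟩
    · exact ⟨x, y, hne, hx, hy, Finset.mem_singleton.1 hp⟩
  · by_cases hi' : i ∈ S'
    · obtain ⟨p, ⟨hp, hip⟩, hu⟩ := h.2 i hi'
      refine ⟨p, ⟨Finset.mem_union_left _ hp, hip⟩, ?_⟩
      rintro q ⟨hq, hiq⟩
      rcases Finset.mem_union.1 hq with hq | hq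
      · exact hu q ⟨hq, hiq⟩
      · rw [Finset.mem_singleton.1 hq] at hiq
        simp [((hS i).1 hi').2.1, ((hS i).1 hi').2.2] at hiq
    · have hixy : i ∈ ({x, y} : Finset ℕ) := by
        rw [hS] at hi'
        simp only [Finset.mem_insert, Finset.mem_singleton]
        tauto
      refine ⟨{x, y}, ⟨by simp, hixy⟩, ?_⟩
      rintro q ⟨hq, hiq⟩
      rcases Finset.mem_union.1 hq with hq | hq
      · exact absurd (h.subset hq hiq) hi'
      · exact Finset.mem_singleton.1 hq

/-- Blocking depends only on the pairs of `M` that contain `i` or `j`. -/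
theorem IsBlocking.congr {t : ℕ → AttrType} {M N : Finset (Finset ℕ)} {i j : ℕ}
    (hi : ∀ k, ({i, k} : Finset ℕ) ∈ M ↔ ({i, k} : Finset ℕ) ∈ N)
    (hj : ∀ k, ({j, k} : Finset ℕ) ∈ M ↔ ({j, k} : Finset ℕ) ∈ N)
    (h : IsBlocking t M i j) : IsBlocking t N i j :=
  ⟨h.1, fun hN => h.2.1 ((hi j).2 hN), fun k hk => h.2.2.1 k ((hi k).2 hk),
    fun k hk => h.2.2.2 k ((hj k).2 hk)⟩

theorem pair_ne_pair {x y i : ℕ} (hx : i ≠ x) (hy : i ≠ y) (k : ℕ) :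
    ({i, k} : Finset ℕ) ≠ {x, y} := by
  intro e
  have : i ∈ ({x, y} : Finset ℕ) := by rw [← e]; simp
  simp [hx, hy] at this

/-- The people `m+2`, `m+3` and `m+4` play the roles of `2n-2`, `2n-1` and `2n`. -/
theorem topPair_mem {m : ℕ} {t : ℕ → AttrType} (h1 : t (m + 2) = AttrType.B)
    (h2 : t (m + 3) = AttrType.B) (h3 : t (m + 4) = AttrType.A)
    (hi : ∃ i, 1 ≤ i ∧ i < m + 2 ∧ t i = AttrType.B) {M : Finset (Finset ℕ)}
    (h : IsStable t (Finset.Icc 1 (m + 4)) M) : ({m + 2, m + 3} : Finset ℕ) ∈ M := by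
  obtain ⟨hM, hst⟩ := h
  by_contra hn
  obtain ⟨i, hi1, hi2, hiB⟩ := hi
  -- If `z` had a partner at least `x`, the pair `{i, z}` would block.
  have hz : ∀ k, ({m + 4, k} : Finset ℕ) ∈ M → m + 2 ≤ k → False := by
    intro k hk hkx
    refine hst i (by simp; omega) (m + 4) (by simp) ⟨by omega, ?_, ?_, ?_⟩
    · intro hc
      rw [Finset.pair_comm] at hc
      have := hM.partner_unique hk hc
      omega
    · intro l hl hli
      have hlS := hM.subset hl (show l ∈ ({i, l} : Finset ℕ) by simp)
      rw [prefers_B hiB]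
      have hlz : l ≠ m + 4 := by
        rintro rfl
        rw [Finset.pair_comm] at hl
        have := hM.partner_unique hk hl
        omega
      simp only [Finset.mem_Icc] at hlS
      omega
    · intro l hl _
      rw [prefers_A h3, ← hM.partner_unique hk hl]
      omega
  have hxz : ({m + 2, m + 4} : Finset ℕ) ∉ M := fun hc =>
    hz (m + 2) (by rwa [Finset.pair_comm]) le_rfl
  have hyz : ({m + 3, m + 4} : Finset ℕ) ∉ M := fun hc =>
    hz (m + 3) (by rwa [Finset.pair_comm]) (by omega)
  refine hst (m + 2) (by simp) (m + 3) (by simp) ⟨by omega, hn, ?_, ?_⟩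
  · intro k hk hne
    have hkS := hM.subset hk (show k ∈ ({m + 2, k} : Finset ℕ) by simp)
    rw [prefers_B h1]
    have : k ≠ m + 3 := by rintro rfl; exact hn hk
    have : k ≠ m + 4 := by rintro rfl; exact hxz hk
    simp only [Finset.mem_Icc] at hkS
    omega
  · intro k hk hne
    have hkS := hM.subset hk (show k ∈ ({m + 3, k} : Finset ℕ) by simp)
    rw [prefers_B h2]
    have : k ≠ m + 2 := by rintro rfl; exact hn (by rwa [Finset.pair_comm])
    have : k ≠ m + 4 := by rintro rfl; exact hyz hk
    simp only [Finset.mem_Icc] at hkS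
    omega

theorem stable_erase_pair {S S' : Finset ℕ} {t : ℕ → AttrType} {M : Finset (Finset ℕ)} {x y : ℕ}
    (hS : ∀ a, a ∈ S' ↔ a ∈ S ∧ a ≠ x ∧ a ≠ y) (h : IsStable t S M)
    (hxy : ({x, y} : Finset ℕ) ∈ M) : IsStable t S' (M.erase {x, y}) := by
  refine ⟨h.1.erase_pair hS hxy, fun i hi j hj hb => ?_⟩
  obtain ⟨hiS, hix, hiy⟩ := (hS i).1 hi
  obtain ⟨hjS, hjx, hjy⟩ := (hS j).1 hj
  exact h.2 i hiS j hjS (hb.congr (fun k => by simp [pair_ne_pair hix hiy k])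
    (fun k => by simp [pair_ne_pair hjx hjy k]))

theorem stable_union_topPair {m : ℕ} {t : ℕ → AttrType} (h1 : t (m + 2) = AttrType.B)
    (h2 : t (m + 3) = AttrType.B) (h3 : t (m + 4) = AttrType.A)
    {S' : Finset ℕ} {M : Finset (Finset ℕ)}
    (hS : ∀ a, a ∈ S' ↔ a ∈ Finset.Icc 1 (m + 4) ∧ a ≠ m + 2 ∧ a ≠ m + 3)
    (h : IsStable t S' M) :
    IsStable t (Finset.Icc 1 (m + 4)) (M ∪ {({m + 2, m + 3} : Finset ℕ)}) := by
  set N := M ∪ {({m + 2, m + 3} : Finset ℕ)} with hN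
  have hxyN : ({m + 2, m + 3} : Finset ℕ) ∈ N := by simp [hN]
  refine ⟨h.1.union_pair hS (by omega) (by simp) (by simp), ?_⟩
  -- `z` keeps a partner below `x`, so it joins neither `x` nor `y`.
  have hzS : m + 4 ∈ S' := (hS _).2 ⟨by simp, by omega, by omega⟩
  have hz : ∀ w, m + 2 ≤ w → ¬ IsBlocking t N (m + 4) w := by
    intro w hw hb
    obtain ⟨k, hk, hkz, hkM⟩ := h.1.exists_partner hzS
    have hp := hb.2.2.1 k (Finset.mem_union_left _ hkM) hkz
    rw [prefers_A h3] at hp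
    have := (hS k).1 hk
    simp only [Finset.mem_Icc] at this
    omega
  have hx : ∀ j ∈ Finset.Icc 1 (m + 4), ¬ IsBlocking t N (m + 2) j := by
    intro j hj hb
    have hp := hb.2.2.1 (m + 3) hxyN (by omega)
    rw [prefers_B h1] at hp
    simp only [Finset.mem_Icc] at hj
    obtain rfl : j = m + 4 := by omega
    exact hz _ le_rfl hb.symm
  have hy : ∀ j ∈ Finset.Icc 1 (m + 4), ¬ IsBlocking t N (m + 3) j := by
    intro j hj hb
    have hp := hb.2.2.1 (m + 2) (by rwa [Finset.pair_comm]) (by omega)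
    rw [prefers_B h2] at hp
    simp only [Finset.mem_Icc] at hj
    have := hb.1
    obtain rfl : j = m + 4 := by omega
    exact hz _ (by omega) hb.symm
  intro i hi j hj hb
  have hix : i ≠ m + 2 := by rintro rfl; exact hx j hj hb
  have hiy : i ≠ m + 3 := by rintro rfl; exact hy j hj hb
  have hjx : j ≠ m + 2 := by rintro rfl; exact hx i hi hb.symm
  have hjy : j ≠ m + 3 := by rintro rfl; exact hy i hi hb.symm
  exact h.2 i ((hS i).2 ⟨hi, hix, hiy⟩) j ((hS j).2 ⟨hj, hjx, hjy⟩)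
    (hb.congr (fun k => by simp [hN, pair_ne_pair hix hiy k])
      (fun k => by simp [hN, pair_ne_pair hjx hjy k]))

/-- Case (S3): types (2n-2)B, (2n-1)B, (2n)A and iB for some i < 2n-2.  Every
stable matching contains the pair {2n-2,2n-1}, and the stable matchings are
exactly the stable matchings of the restricted instance on
{1,…,2n-3} ∪ {2n} together with {2n-2,2n-1}. -/
theorem one_attribute_case_S3 (n : ℕ) (hn : 2 ≤ n) (t : ℕ → AttrType)
    (h1 : t (2 * n - 2) = AttrType.B) (h2 : t (2 * n - 1) = AttrType.B)
    (h3 : t (2 * n) = AttrType.A)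
    (hi : ∃ i, 1 ≤ i ∧ i < 2 * n - 2 ∧ t i = AttrType.B) :
    (∀ M : Finset (Finset ℕ), IsStable t (Finset.Icc 1 (2 * n)) M →
      ({2 * n - 2, 2 * n - 1} : Finset ℕ) ∈ M) ∧
    (∀ M : Finset (Finset ℕ), IsStable t (Finset.Icc 1 (2 * n)) M ↔
      ∃ M' : Finset (Finset ℕ),
        IsStable t (insert (2 * n) (Finset.Icc 1 (2 * n - 3))) M' ∧
        M = M' ∪ {({2 * n - 2, 2 * n - 1} : Finset ℕ)}) := by

  obtain ⟨m, rfl⟩ : ∃ m, n = m + 2 := ⟨n - 2, by omega⟩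
  have e2 : 2 * (m + 2) - 2 = 2 * m + 2 := by omega
  have e1 : 2 * (m + 2) - 1 = 2 * m + 3 := by omega
  have e0 : 2 * (m + 2) = 2 * m + 4 := by omega
  have e3 : 2 * (m + 2) - 3 = 2 * m + 1 := by omega
  rw [e2] at h1
  rw [e1] at h2
  rw [e0] at h3
  rw [e2] at hi
  rw [e2, e1, e3, e0]
  have hS : ∀ a, a ∈ insert (2 * m + 4) (Finset.Icc 1 (2 * m + 1)) ↔
      a ∈ Finset.Icc 1 (2 * m + 4) ∧ a ≠ 2 * m + 2 ∧ a ≠ 2 * m + 3 := by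
    intro a
    simp only [Finset.mem_insert, Finset.mem_Icc]
    omega
  refine ⟨fun M hM => topPair_mem h1 h2 h3 hi hM, fun M => ⟨fun hM => ?_, ?_⟩⟩
  · have hxy := topPair_mem h1 h2 h3 hi hM
    refine ⟨M.erase {2 * m + 2, 2 * m + 3}, stable_erase_pair hS hM hxy, ?_⟩
    rw [Finset.union_comm, ← Finset.insert_eq, Finset.insert_erase hxy]
  · rintro ⟨M', hM', rfl⟩
    exact stable_union_topPair h1 h2 h3 hS hM'
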